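/- arXiv:2505.09429 — 6 statements merged into one kernel-verified Lean document; each statement's English description precedes it below -/
import Mathlib

section
/- Let p, a, d be real numbers with 0 < p ≤ 1, a > 1, a(1−p) < 1, and d > 0, and let i be a natural number. Then the series ∑_{k=0}^∞ p(1−p)^k · ( (∑_{j=0}^{i+k+1} 2a^j) + (−1)^k d ) / d converges, and its sum equals (1/(d(a−1))) · ( 2a^{i+2}p/(1 + a(p−1)) + p·d·(a−1)/(2−p) − 2 ). -/
/-!
Summing the inner geometric progression splits the series into three geometric series, with ratios
`a * (1 - p)`, `1 - p` and `-(1 - p)`. The first of them carries the cost of expanding the search,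
and `a * (1 - p) < 1` is what makes it converge.
-/

section

variable {𝕜 : Type*} [NormedField 𝕜]

theorem hasSum_pow_mul_geom_sum {a q : 𝕜} (ha : a ≠ 1) (hq : ‖q‖ < 1) (haq : ‖a * q‖ < 1)
    (n : ℕ) :
    HasSum (fun k : ℕ => q ^ k * ∑ j ∈ Finset.range (n + k), a ^ j)
      ((a ^ n * (1 - a * q)⁻¹ - (1 - q)⁻¹) / (a - 1)) := by
  have h_term (k : ℕ) : q ^ k * ∑ j ∈ Finset.range (n + k), a ^ j =
      (a ^ n * (a * q) ^ k - q ^ k) / (a - 1) := by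
    rw [geom_sum_eq ha, pow_add, mul_pow]
    ring
  simp only [h_term]
  exact (((hasSum_geometric_of_norm_lt_one haq).mul_left _).sub
    (hasSum_geometric_of_norm_lt_one hq)).div_const _

theorem hasSum_pow_mul_neg_one_pow {q : 𝕜} (hq : ‖q‖ < 1) :
    HasSum (fun k : ℕ => q ^ k * (-1) ^ k) (1 + q)⁻¹ := by
  have h := hasSum_geometric_of_norm_lt_one ((norm_neg q).trans_lt hq)
  rw [sub_neg_eq_add] at h
  simpa only [← mul_pow, mul_neg_one] using h

theorem fast_approach_series_sum_general {p a d : 𝕜} (hp : ‖1 - p‖ < 1) (ha : a ≠ 1)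
    (hap : ‖a * (1 - p)‖ < 1) (hd : d ≠ 0) (i : ℕ) :
    HasSum
      (fun k : ℕ =>
        p * (1 - p) ^ k * ((∑ j ∈ Finset.range (i + k + 2), 2 * a ^ j) + (-1) ^ k * d) / d)
      (1 / (d * (a - 1)) *
        (2 * a ^ (i + 2) * p / (1 + a * (p - 1)) + p * d * (a - 1) / (2 - p) - 2)) := by
  have h_rounds := (hasSum_pow_mul_geom_sum ha hp hap (i + 2)).mul_left (2 * p / d)
  have h_direction := (hasSum_pow_mul_neg_one_pow hp).mul_left p
  have h_term (k : ℕ) :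
      p * (1 - p) ^ k * ((∑ j ∈ Finset.range (i + k + 2), 2 * a ^ j) + (-1) ^ k * d) / d =
        2 * p / d * ((1 - p) ^ k * ∑ j ∈ Finset.range (i + 2 + k), a ^ j) +
          p * ((1 - p) ^ k * (-1) ^ k) := by
    rw [← Finset.mul_sum, add_right_comm i k 2]
    field_simp
  have hp0 : p ≠ 0 := by
    rintro rfl
    simp at hp
  have ha1 : a - 1 ≠ 0 := sub_ne_zero.mpr ha
  have h_value : 1 / (d * (a - 1)) *
      (2 * a ^ (i + 2) * p / (1 + a * (p - 1)) + p * d * (a - 1) / (2 - p) - 2) =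
        2 * p / d * ((a ^ (i + 2) * (1 - a * (1 - p))⁻¹ - (1 - (1 - p))⁻¹) / (a - 1)) +
          p * (1 + (1 - p))⁻¹ := by
    rw [show 1 - a * (1 - p) = 1 + a * (p - 1) by ring, sub_sub_cancel,
      show 1 + (1 - p) = 2 - p by ring]
    field_simp
    ring
  simp only [h_term]
  rw [h_value]
  exact h_rounds.add h_direction

end

/-- Expected competitive ratio series of the Fast Approach: for 0 < p ≤ 1, a > 1 with
a(1−p) < 1, d > 0 and i : ℕ, the series ∑ₖ p(1−p)ᵏ·((∑_{j=0}^{i+k+1} 2aʲ) + (−1)ᵏ d)/d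
converges to (1/(d(a−1)))·(2a^{i+2}p/(1+a(p−1)) + p·d·(a−1)/(2−p) − 2). -/
theorem fast_approach_series_sum (p a d : ℝ) (hp : 0 < p) (hp1 : p ≤ 1)
    (ha : 1 < a) (hap : a * (1 - p) < 1) (hd : 0 < d) (i : ℕ) :
    HasSum
      (fun k : ℕ =>
        p * (1 - p) ^ k * ((∑ j ∈ Finset.range (i + k + 2), 2 * a ^ j) + (-1 : ℝ) ^ k * d) / d)
      (1 / (d * (a - 1)) *
        (2 * a ^ (i + 2) * p / (1 + a * (p - 1)) + p * d * (a - 1) / (2 - p) - 2)) := by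
  have hq : 0 ≤ 1 - p := sub_nonneg.mpr hp1
  have haq : 0 ≤ a * (1 - p) := mul_nonneg (zero_le_one.trans ha.le) hq
  exact fast_approach_series_sum_general (by rwa [Real.norm_of_nonneg hq, sub_lt_self_iff]) ha.ne'
    (by rwa [Real.norm_of_nonneg haq]) hd.ne' i
end

section
/- Let p, a, d be real numbers with 0 < p < 1, a > 1, and d > 0, and let i be a natural number. Then the sequence k ↦ p(1−p)^k · ( (∑_{j=0}^{i+k+1} 2a^j) + (−1)^k d ) / d is summable if and only if a(1−p) < 1. -/
/-!
Up to the summable alternating part `p * (-(1 - p)) ^ k` and the nonzero factor `2 * p / d`, the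
series has terms `t k = q ^ k * ∑ j < m + k, a ^ j` with `q = 1 - p`. Since `t (k + 1) - q * t k`
is a constant multiple of `(a * q) ^ k`, summability of `t` forces `‖a * q‖ < 1`. Conversely,
`q ^ k * ∑ j ≤ k, a ^ j = ∑ j ≤ k, (a * q) ^ j * q ^ (k - j)` is the Cauchy product of two
absolutely convergent geometric series. Neither direction uses the closed form of the geometric
sum, so `a = 1` is not a special case.
-/

open Finset

theorem summable_pow_succ_mul_of_summable_pow_mul_sum_range {R : Type*} [Ring R]
    [TopologicalSpace R] [IsTopologicalRing R] {q : R} {f : ℕ → R} {m : ℕ}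
    (h : Summable fun k ↦ q ^ k * ∑ j ∈ range (m + k), f j) :
    Summable fun k ↦ q ^ (k + 1) * f (m + k) := by
  refine (((summable_nat_add_iff 1).mpr h).sub (h.mul_left q)).congr fun k ↦ ?_
  rw [← add_assoc, sum_range_succ, mul_add, pow_succ', mul_assoc q, add_sub_cancel_left]

section NormedField

variable {𝕜 : Type*} [NormedField 𝕜]

theorem norm_mul_lt_one_of_summable_pow_mul_geom_sum {q a : 𝕜} {m : ℕ}
    (h : Summable fun k ↦ q ^ k * ∑ j ∈ range (m + k), a ^ j) : ‖a * q‖ < 1 := by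
  rcases eq_or_ne (a * q) 0 with haq | haq
  · simp [haq]
  have hcoeff : q * a ^ m ≠ 0 :=
    mul_ne_zero (right_ne_zero_of_mul haq) (pow_ne_zero m (left_ne_zero_of_mul haq))
  rw [← summable_geometric_iff_norm_lt_one, ← summable_mul_left_iff hcoeff]
  exact (summable_pow_succ_mul_of_summable_pow_mul_sum_range h).congr fun k ↦ by ring

theorem summable_pow_mul_geom_sum {q a : 𝕜} (hq : ‖q‖ < 1) (haq : ‖a * q‖ < 1) :
    Summable fun k ↦ q ^ k * ∑ j ∈ range k, a ^ j := by
  have hcauchy : Summable fun k ↦ ∑ j ∈ range (k + 1), (a * q) ^ j * q ^ (k - j) :=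
    summable_sum_mul_range_of_summable_norm'
      (summable_norm_geometric_of_norm_lt_one haq) (summable_geometric_of_norm_lt_one haq)
      (summable_norm_geometric_of_norm_lt_one hq) (summable_geometric_of_norm_lt_one hq)
  refine (summable_nat_add_iff 1).mp ((hcauchy.mul_left q).congr fun k ↦ ?_)
  rw [pow_succ', mul_assoc, mul_sum (range (k + 1)) _ (q ^ k)]
  congr 1
  refine sum_congr rfl fun j hj ↦ ?_
  rw [mul_pow, mul_assoc, pow_mul_pow_sub q (mem_range_succ_iff.mp hj), mul_comm]

theorem summable_pow_mul_geom_sum_iff {q a : 𝕜} (hq : ‖q‖ < 1) (m : ℕ) :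
    (Summable fun k ↦ q ^ k * ∑ j ∈ range (m + k), a ^ j) ↔ ‖a * q‖ < 1 := by
  refine ⟨norm_mul_lt_one_of_summable_pow_mul_geom_sum, fun haq ↦ ?_⟩
  have hinitial : Summable fun k ↦ q ^ k * ∑ j ∈ range m, a ^ j :=
    (summable_geometric_of_norm_lt_one hq).mul_right _
  have htail : Summable fun k ↦ a ^ m * (q ^ k * ∑ j ∈ range k, a ^ j) :=
    (summable_pow_mul_geom_sum hq haq).mul_left _
  refine (hinitial.add htail).congr fun k ↦ ?_
  simp only [sum_range_add, pow_add a m, ← mul_sum]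
  ring

theorem fast_approach_summable_iff_general [NeZero (2 : 𝕜)] {p a d : 𝕜} (hp : ‖1 - p‖ < 1)
    (hd : d ≠ 0) (i : ℕ) :
    (Summable fun k : ℕ ↦
        p * (1 - p) ^ k * ((∑ j ∈ range (i + k + 2), 2 * a ^ j) + (-1) ^ k * d) / d)
      ↔ ‖a * (1 - p)‖ < 1 := by
  have hp0 : p ≠ 0 := by
    rintro rfl
    simp at hp
  have hcoeff : 2 * p / d ≠ 0 := div_ne_zero (mul_ne_zero two_ne_zero hp0) hd
  have halternating : Summable fun k : ℕ ↦ p * (-(1 - p)) ^ k :=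
    (summable_geometric_of_norm_lt_one (by rwa [norm_neg])).mul_left p
  calc
    _ ↔ Summable fun k ↦ 2 * p / d * ((1 - p) ^ k * ∑ j ∈ range (i + 2 + k), a ^ j) := by
      refine summable_iff_of_summable_sub (halternating.congr fun k ↦ ?_)
      rw [← mul_sum, neg_pow, add_right_comm i 2 k]
      field_simp
      ring
    _ ↔ Summable fun k ↦ (1 - p) ^ k * ∑ j ∈ range (i + 2 + k), a ^ j :=
      summable_mul_left_iff hcoeff
    _ ↔ ‖a * (1 - p)‖ < 1 := summable_pow_mul_geom_sum_iff hp (i + 2)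

end NormedField

/-- The Fast Approach expected competitive ratio series is summable iff a(1−p) < 1. -/
theorem fast_approach_summable_iff (p a d : ℝ) (hp : 0 < p) (hp1 : p < 1)
    (ha : 1 < a) (hd : 0 < d) (i : ℕ) :
    Summable
      (fun k : ℕ =>
        p * (1 - p) ^ k * ((∑ j ∈ Finset.range (i + k + 2), 2 * a ^ j) + (-1 : ℝ) ^ k * d) / d)
      ↔ a * (1 - p) < 1 := by
  have hq : ‖1 - p‖ < 1 := by rw [Real.norm_of_nonneg] <;> linarith
  rw [fast_approach_summable_iff_general hq hd.ne', Real.norm_of_nonneg]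
  exact mul_nonneg (by linarith) (by linarith)
end

section
/- Let p and a be real numbers with 0 < p ≤ 1, a > 1 and a(1−p) < 1, and let i be a natural number. Then the function d ↦ (1/(d(a−1))) · ( 2a^{i+2}p/(1 + a(p−1)) + p·d·(a−1)/(2−p) − 2 ) is strictly decreasing on the interval (0, ∞). -/
/-!
For `d > 0` the ratio equals `(C - 2) / (a - 1) / d + p / (2 - p)`, where
`C = 2 * a ^ (i + 2) * p / (1 + a * (p - 1))` does not depend on `d`, so everything reduces to
`2 < C`. This holds because `a ≤ a ^ (i + 2)` and `a * p` exceeds the denominator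
`1 + a * (p - 1)` by exactly `a - 1`.
-/

section OrderedField

variable {K : Type*} [Field K] [LinearOrder K] [IsStrictOrderedRing K]

theorem strictAntiOn_const_div_Ioi {c : K} (hc : 0 < c) :
    StrictAntiOn (fun x : K => c / x) (Set.Ioi 0) :=
  fun _ hx _ _ hxy => div_lt_div_of_pos_left hc hx hxy

theorem one_lt_pow_mul_div_one_add_mul_sub_one {a p : K} (ha : 1 < a) (hap : a * (1 - p) < 1)
    {n : ℕ} (hn : n ≠ 0) : 1 < a ^ n * p / (1 + a * (p - 1)) := by
  have ha₀ : 0 < a := zero_lt_one.trans ha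
  have hp : 0 < p := (mul_pos_iff_of_pos_left ha₀).1 (by linarith)
  have hden : 0 < 1 + a * (p - 1) := by linarith
  rw [one_lt_div hden]
  calc
    1 + a * (p - 1) < a * p := by linarith
    _ ≤ a ^ n * p := by gcongr; exact le_self_pow₀ ha.le hn

theorem fast_cr_strictAnti_general {p a : K} (hp : p ≠ 2) (ha : 1 < a) (hap : a * (1 - p) < 1)
    {n : ℕ} (hn : n ≠ 0) :
    StrictAntiOn
      (fun d : K =>
        1 / (d * (a - 1)) *
          (2 * a ^ n * p / (1 + a * (p - 1)) + p * d * (a - 1) / (2 - p) - 2))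
      (Set.Ioi 0) := by
  have hC : 2 < 2 * a ^ n * p / (1 + a * (p - 1)) := by
    rw [mul_assoc, mul_div_assoc]
    exact lt_mul_of_one_lt_right two_pos (one_lt_pow_mul_div_one_add_mul_sub_one ha hap hn)
  generalize 2 * a ^ n * p / (1 + a * (p - 1)) = C at hC ⊢
  have ha₁ : 0 < a - 1 := sub_pos.2 ha
  have ratio_eq : ∀ d ∈ Set.Ioi (0 : K), (C - 2) / (a - 1) / d + p / (2 - p) =
      1 / (d * (a - 1)) * (C + p * d * (a - 1) / (2 - p) - 2) := by
    intro d hd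
    have hd₀ : d ≠ 0 := ne_of_gt hd
    have ha₁₀ : a - 1 ≠ 0 := ha₁.ne'
    have hp₂ : 2 - p ≠ 0 := sub_ne_zero.2 hp.symm
    field_simp
    ring
  have hcoeff : 0 < (C - 2) / (a - 1) := div_pos (sub_pos.2 hC) ha₁
  exact ((strictAntiOn_const_div_Ioi hcoeff).add_const (p / (2 - p))).congr ratio_eq

end OrderedField

/-- The closed-form expected competitive ratio of the Fast Approach is strictly decreasing
in the target distance d on (0, ∞). -/
theorem fast_cr_strictAnti (p a : ℝ) (hp : 0 < p) (hp1 : p ≤ 1)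
    (ha : 1 < a) (hap : a * (1 - p) < 1) (i : ℕ) :
    StrictAntiOn
      (fun d : ℝ =>
        1 / (d * (a - 1)) *
          (2 * a ^ (i + 2) * p / (1 + a * (p - 1)) + p * d * (a - 1) / (2 - p) - 2))
      (Set.Ioi 0) :=
  fast_cr_strictAnti_general (hp1.trans_lt one_lt_two).ne ha hap (Nat.succ_ne_zero _)
end

section
/- Let v be a real number with 0 < v < 1, let a = 1 + √(2v/(1+v)), let i be a natural number, and let d be a real number with a^i < d ≤ a^{i+2}. Then ( ∑_{j=0}^{i+1}( a^{j−2} + (a^j − a^{j−2})/v + a^j ) + a^i + (d − a^i)/v ) / d < 3 + 2√(2 + 2/v) + 2/v, where a^{j−2} denotes a^j/a². -/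
/-!
Round times grow geometrically, so for every expansion ratio `a > 1` the rounds `0, …, i + 1` cost
less than `aⁱ ((a² + 1) / (a - 1) + (a + 1) / v)`. The resulting bound on the competitive ratio is
largest as the distance decreases to `aⁱ`, where it tends to `(a + 1) (a / (a - 1) + 1 / v)`.
With `r = √(2 + 2 / v)`, the choice `a = 1 + 2 / r` minimises this expression, and the minimum is
`(1 + r)² = 3 + 2 r + 2 / v`.
-/

namespace SlowApproach

section Field

variable {K : Type*} [Field K]

/-- The bound `a^{j-2} + (a^j - a^{j-2}) / v + a^j` on the duration of round `j`, for expansion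
ratio `a` and slow speed `v`; `a^{j-2}` is encoded as `a ^ j / a ^ 2` since `j` may be below `2`. -/
def roundTime (a v : K) (j : ℕ) : K :=
  a ^ j / a ^ 2 + (a ^ j - a ^ j / a ^ 2) / v + a ^ j

/-- The bound on the total time until a target at distance `d ∈ (a^i, a^{i+2}]` is found: the
unsuccessful rounds `0, …, i + 1`, then a run to distance `a ^ i` at unit speed, then the slow
approach to `d` at speed `v`. -/
def searchTime (a v : K) (i : ℕ) (d : K) : K :=
  (∑ j ∈ Finset.range (i + 2), roundTime a v j) + a ^ i + (d - a ^ i) / v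

theorem roundTime_eq_pow_mul (a v : K) (j : ℕ) : roundTime a v j = a ^ j * roundTime a v 0 := by
  simp only [roundTime]
  ring

theorem sum_range_roundTime {a : K} (ha : a ≠ 1) (v : K) (n : ℕ) :
    ∑ j ∈ Finset.range n, roundTime a v j = (a ^ n - 1) / (a - 1) * roundTime a v 0 := by
  rw [Finset.sum_congr rfl fun j _ ↦ roundTime_eq_pow_mul a v j, ← Finset.sum_mul, geom_sum_eq ha]

end Field

section OrderedField

variable {K : Type*} [Field K] [LinearOrder K] [IsStrictOrderedRing K] {a v d : K} {i : ℕ}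

theorem roundTime_pos (ha : 1 < a) (hv : 0 < v) (j : ℕ) : 0 < roundTime a v j := by
  have : 0 < a := one_pos.trans ha
  have hdiff : 0 ≤ a ^ j - a ^ j / a ^ 2 :=
    sub_nonneg.2 (div_le_self (by positivity) (one_le_pow₀ ha.le))
  unfold roundTime
  positivity

theorem sum_range_roundTime_lt (ha : 1 < a) (hv : 0 < v) (i : ℕ) :
    ∑ j ∈ Finset.range (i + 2), roundTime a v j <
      a ^ i * ((a ^ 2 + 1) / (a - 1) + (a + 1) / v) := by
  have : 0 < a := one_pos.trans ha
  have : 0 < a - 1 := sub_pos.2 ha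
  have hT := roundTime_pos ha hv 0
  calc ∑ j ∈ Finset.range (i + 2), roundTime a v j
      = (a ^ (i + 2) - 1) / (a - 1) * roundTime a v 0 := sum_range_roundTime ha.ne' v _
    _ < a ^ (i + 2) / (a - 1) * roundTime a v 0 := by gcongr; exact sub_one_lt _
    _ = a ^ i * ((a ^ 2 + 1) / (a - 1) + (a + 1) / v) := by
      unfold roundTime
      field_simp
      ring

theorem searchTime_div_lt (ha : 1 < a) (hv : 0 < v) (hd : a ^ i < d) :
    searchTime a v i d / d < (a + 1) * (a / (a - 1) + 1 / v) := by
  have ha₀ : 0 < a := one_pos.trans ha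
  have : 0 < a - 1 := sub_pos.2 ha
  rw [div_lt_iff₀ ((pow_pos ha₀ i).trans hd)]
  calc searchTime a v i d
      < a ^ i * ((a ^ 2 + 1) / (a - 1) + (a + 1) / v) + a ^ i + (d - a ^ i) / v := by
        unfold searchTime
        gcongr
        exact sum_range_roundTime_lt ha hv i
    _ = a ^ i * ((a + 1) * a / (a - 1) + a / v) + d / v := by
        field_simp
        ring
    _ < d * ((a + 1) * a / (a - 1) + a / v) + d / v := by gcongr
    _ = (a + 1) * (a / (a - 1) + 1 / v) * d := by ring

end OrderedField

theorem sqrt_two_mul_div_one_add {v : ℝ} (hv : 0 < v) :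
    √(2 * v / (1 + v)) = 2 / √(2 + 2 / v) := by
  rw [Real.sqrt_eq_iff_eq_sq (by positivity) (by positivity), div_pow, Real.sq_sqrt (by positivity)]
  field_simp
  ring

theorem ratio_bound_at_optimum {v : ℝ} (hv : 0 < v) :
    (1 + √(2 * v / (1 + v)) + 1) *
        ((1 + √(2 * v / (1 + v))) / (1 + √(2 * v / (1 + v)) - 1) + 1 / v) =
      3 + 2 * √(2 + 2 / v) + 2 / v := by
  rw [sqrt_two_mul_div_one_add hv]
  have hr : 0 < √(2 + 2 / v) := by positivity
  have hr_sq : √(2 + 2 / v) ^ 2 = 2 + 2 / v := Real.sq_sqrt (by positivity)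
  set r := √(2 + 2 / v)
  have hv_inv : 1 / v = r ^ 2 / 2 - 1 := by
    rw [hr_sq]
    ring
  calc (1 + 2 / r + 1) * ((1 + 2 / r) / (1 + 2 / r - 1) + 1 / v)
      = (1 + r) ^ 2 := by
        rw [hv_inv, add_sub_cancel_left]
        field_simp
        ring
    _ = 3 + 2 * r + 2 / v := by linear_combination hr_sq

end SlowApproach

open SlowApproach in
theorem slow_approach_cr_bound_general {v : ℝ} (hv : 0 < v) {i : ℕ} {d : ℝ}
    (hd : (1 + √(2 * v / (1 + v))) ^ i < d) :
    searchTime (1 + √(2 * v / (1 + v))) v i d / d < 3 + 2 * √(2 + 2 / v) + 2 / v := by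
  have ha : 1 < 1 + √(2 * v / (1 + v)) := lt_add_of_pos_right 1 (by positivity)
  exact (searchTime_div_lt ha hv hd).trans_eq (ratio_bound_at_optimum hv)

/-- Theorem 2 (analytic content): with a = 1 + √(2v/(1+v)), for a target at distance
d ∈ (aⁱ, a^{i+2}], the competitive ratio of the Slow Approach is below
3 + 2√(2 + 2/v) + 2/v. -/
theorem slow_approach_cr_bound (v : ℝ) (hv : 0 < v) (hv1 : v < 1) (i : ℕ) (d : ℝ)
    (hd1 : (1 + Real.sqrt (2 * v / (1 + v))) ^ i < d)
    (hd2 : d ≤ (1 + Real.sqrt (2 * v / (1 + v))) ^ (i + 2)) :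
    ((∑ j ∈ Finset.range (i + 2),
        ((1 + Real.sqrt (2 * v / (1 + v))) ^ j / (1 + Real.sqrt (2 * v / (1 + v))) ^ 2 +
          ((1 + Real.sqrt (2 * v / (1 + v))) ^ j -
            (1 + Real.sqrt (2 * v / (1 + v))) ^ j / (1 + Real.sqrt (2 * v / (1 + v))) ^ 2) / v +
          (1 + Real.sqrt (2 * v / (1 + v))) ^ j)) +
      (1 + Real.sqrt (2 * v / (1 + v))) ^ i +
      (d - (1 + Real.sqrt (2 * v / (1 + v))) ^ i) / v) / d
      < 3 + 2 * Real.sqrt (2 + 2 / v) + 2 / v :=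
  slow_approach_cr_bound_general hv hd1
end

section
/- Let v be a real number with 0 < v ≤ 1. Then for every real β with β > 1/v, 1 + (1+β)( v(1+β) + √(4 + v(6βv + (1+β²)v − 4(1+β))) )/(2(βv − 1)) ≥ 3 + 2√(2 + 2/v) + 2/v, with equality when β = 1 + 2/v. -/
/-!
Put `x = β * v - 1` and `a = 1 + v`, so that `v * (1 + β) = x + a`. The radicand becomes
`(x - a) ^ 2 + 8 * v * x`, and the bound becomes
`1 + (x + a) * (x + a + √((x - a) ^ 2 + 8 * v * x)) / x / (2 * v)`.
By AM-GM, `x + a ≥ 2 * √(a * x)`, and the square root is at least `√(8 * v * x)`. Both estimates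
are equalities at `x = a`, that is at `β = 1 + 2 / v`, and the powers of `x` in their products
cancel against the denominator.
-/

section AddMulAddSqrt

variable {a c x : ℝ}

theorem two_mul_sqrt_mul_mul_le_add_mul_sqrt (ha : 0 ≤ a) (hx : 0 ≤ x) :
    2 * √(a * c) * x ≤ (x + a) * √((x - a) ^ 2 + c * x) := by
  have am_gm : √(4 * x * a) ≤ x + a :=
    Real.sqrt_le_iff.2 ⟨by positivity, four_mul_le_sq_add x a⟩
  have sqrt_le : √(c * x) ≤ √((x - a) ^ 2 + c * x) :=
    Real.sqrt_le_sqrt (le_add_of_nonneg_left (sq_nonneg _))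
  calc 2 * √(a * c) * x = √((2 * x) ^ 2 * (a * c)) := by
        rw [Real.sqrt_mul (sq_nonneg _), Real.sqrt_sq (by positivity)]
        ring
    _ = √(4 * x * a) * √(c * x) := by
        rw [← Real.sqrt_mul (by positivity)]
        ring_nf
    _ ≤ (x + a) * √((x - a) ^ 2 + c * x) := by gcongr

theorem four_mul_add_two_mul_sqrt_mul_le_div (ha : 0 ≤ a) (hx : 0 < x) :
    4 * a + 2 * √(a * c) ≤ (x + a) * (x + a + √((x - a) ^ 2 + c * x)) / x := by
  rw [le_div_iff₀ hx]
  linarith [four_mul_le_sq_add x a, two_mul_sqrt_mul_mul_le_add_mul_sqrt (c := c) ha hx.le]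

theorem add_self_mul_add_sqrt_div_self (ha : a ≠ 0) :
    (a + a) * (a + a + √((a - a) ^ 2 + c * a)) / a = 4 * a + 2 * √(a * c) := by
  rw [sub_self, zero_pow two_ne_zero, zero_add, mul_comm c]
  field_simp
  ring

end AddMulAddSqrt

/-- The lower bound on the competitive ratio of linear search at slow speed `v`, in the case
`p = 0`, forced on an algorithm whose elapsed time is asymptotically `β` times the length of
the explored region. Only `1 / v < β` is meaningful: at `β = 1 / v` the quotient is `0` by
convention. -/
noncomputable def competitiveRatioBound (v β : ℝ) : ℝ :=
  1 + (1 + β) * (v * (1 + β) + √(4 + v * (6 * β * v + (1 + β ^ 2) * v - 4 * (1 + β)))) /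
    (2 * (β * v - 1))

section CompetitiveRatioBound

variable {v : ℝ}

theorem competitiveRatioBound_eq_of_mul_sub_one_eq {β x : ℝ} (hv : v ≠ 0) (h : β * v - 1 = x) :
    competitiveRatioBound v β =
      1 + (x + (1 + v)) * (x + (1 + v) + √((x - (1 + v)) ^ 2 + 8 * v * x)) / x / (2 * v) := by
  have radicand_eq : 4 + v * (6 * β * v + (1 + β ^ 2) * v - 4 * (1 + β)) =
      (x - (1 + v)) ^ 2 + 8 * v * x := by
    rw [← h]
    ring
  have mul_one_add : v * (1 + β) = x + (1 + v) := by linarith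
  have one_add : 1 + β = (x + (1 + v)) / v := eq_div_of_mul_eq hv (by linarith)
  rw [competitiveRatioBound, radicand_eq, mul_one_add, one_add, h]
  ring

theorem sqrt_one_add_mul_eight_mul (hv : 0 < v) :
    √((1 + v) * (8 * v)) = 2 * v * √(2 + 2 / v) := by
  have factor_sq : (1 + v) * (8 * v) = (2 * v) ^ 2 * (2 + 2 / v) := by
    field_simp
    ring
  rw [factor_sq, Real.sqrt_mul (sq_nonneg _), Real.sqrt_sq (by positivity)]

theorem one_add_four_mul_add_two_mul_sqrt_div (hv : 0 < v) :
    1 + (4 * (1 + v) + 2 * √((1 + v) * (8 * v))) / (2 * v) =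
      3 + 2 * √(2 + 2 / v) + 2 / v := by
  rw [sqrt_one_add_mul_eight_mul hv]
  field_simp
  ring

theorem le_competitiveRatioBound {β : ℝ} (hv : 0 < v) (hβ : 1 / v < β) :
    3 + 2 * √(2 + 2 / v) + 2 / v ≤ competitiveRatioBound v β := by
  have hx : 0 < β * v - 1 := sub_pos.2 ((div_lt_iff₀ hv).1 hβ)
  rw [competitiveRatioBound_eq_of_mul_sub_one_eq hv.ne' rfl,
    ← one_add_four_mul_add_two_mul_sqrt_div hv]
  gcongr
  exact four_mul_add_two_mul_sqrt_mul_le_div (by positivity) hx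

theorem competitiveRatioBound_one_add_two_div (hv : 0 < v) :
    competitiveRatioBound v (1 + 2 / v) = 3 + 2 * √(2 + 2 / v) + 2 / v := by
  have hx : (1 + 2 / v) * v - 1 = 1 + v := by
    field_simp
    ring
  rw [competitiveRatioBound_eq_of_mul_sub_one_eq hv.ne' hx,
    add_self_mul_add_sqrt_div_self (by positivity), one_add_four_mul_add_two_mul_sqrt_div hv]

theorem lower_bound_minimization_general (hv : 0 < v) :
    (∀ β : ℝ, 1 / v < β → 3 + 2 * √(2 + 2 / v) + 2 / v ≤ competitiveRatioBound v β) ∧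
      competitiveRatioBound v (1 + 2 / v) = 3 + 2 * √(2 + 2 / v) + 2 / v :=
  ⟨fun _ => le_competitiveRatioBound hv, competitiveRatioBound_one_add_two_div hv⟩

end CompetitiveRatioBound

/-- Theorem 3 (minimization step): for 0 < v ≤ 1 and any β > 1/v, the lower-bound
expression is at least 3 + 2√(2 + 2/v) + 2/v, with equality when β = 1 + 2/v. -/
theorem lower_bound_minimization (v : ℝ) (hv : 0 < v) (hv1 : v ≤ 1) :
    (∀ β : ℝ, 1 / v < β →
      1 + (1 + β) *
          (v * (1 + β) +
            Real.sqrt (4 + v * (6 * β * v + (1 + β ^ 2) * v - 4 * (1 + β)))) /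
          (2 * (β * v - 1))
        ≥ 3 + 2 * Real.sqrt (2 + 2 / v) + 2 / v) ∧
    (1 + (1 + (1 + 2 / v)) *
        (v * (1 + (1 + 2 / v)) +
          Real.sqrt (4 + v * (6 * (1 + 2 / v) * v + (1 + (1 + 2 / v) ^ 2) * v
            - 4 * (1 + (1 + 2 / v))))) / (2 * ((1 + 2 / v) * v - 1))
      = 3 + 2 * Real.sqrt (2 + 2 / v) + 2 / v) :=
  lower_bound_minimization_general hv
end

section
/- Let p and v be real numbers with 0 < p ≤ 1 and 0 < v ≤ 1, and set F = 8/p + p/(2−p) − 3. Then 8/p + p/(2−p) < 3 + 2/v + 2√(2 + 2/v) if and only if v < 2/(F + 2 − 2√(F + 3)). -/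
/-!
The slow ratio is a perfect square, `3 + 2 / v + 2 * √(2 + 2 / v) = (1 + √(2 + 2 / v)) ^ 2`, so
comparing it with `a` amounts to comparing `√a - 1` with `√(2 + 2 / v)`, which is linear in `2 / v`
after squaring. Solving for `v` divides by `(√a - 1) ^ 2 - 2`, which is positive exactly when `a`
exceeds `(1 + √2) ^ 2 ≈ 5.83`, the limit of the slow ratio as `v → ∞`; the fast ratio is at least
`8`.
-/

/-- The expected competitive ratio of the Fast Approach, which moves at speed `1` and detects the
target with probability `p`. -/
noncomputable def fastRatio (p : ℝ) : ℝ := 8 / p + p / (2 - p)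

/-- The competitive ratio of the Slow Approach, which moves at speed `v` and always detects the
target. -/
noncomputable def slowRatio (v : ℝ) : ℝ := 3 + 2 / v + 2 * √(2 + 2 / v)

theorem lt_one_add_sqrt_sq_iff {a b : ℝ} (ha : 1 ≤ a) :
    a < (1 + √b) ^ 2 ↔ (√a - 1) ^ 2 < b := by
  have one_le_sqrt : 1 ≤ √a := Real.one_le_sqrt.mpr ha
  calc
    a < (1 + √b) ^ 2 ↔ √a < 1 + √b := (Real.sqrt_lt' (by positivity)).symm
    _ ↔ √a - 1 < √b := sub_lt_iff_lt_add'.symm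
    _ ↔ (√a - 1) ^ 2 < b := Real.lt_sqrt (sub_nonneg.mpr one_le_sqrt)

theorem lt_sqrt_sub_one_sq_of_one_add_sqrt_sq_lt {a b : ℝ} (h : (1 + √b) ^ 2 < a) :
    b < (√a - 1) ^ 2 :=
  Real.lt_sq_of_sqrt_lt (lt_sub_iff_add_lt'.mpr (Real.lt_sqrt_of_sq_lt h))

theorem slowRatio_eq_sq {v : ℝ} (hv : 0 < v) : slowRatio v = (1 + √(2 + 2 / v)) ^ 2 := by
  have sq_sqrt : √(2 + 2 / v) ^ 2 = 2 + 2 / v := Real.sq_sqrt (by positivity)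
  rw [slowRatio]
  linear_combination -sq_sqrt

theorem lt_slowRatio_iff {a v : ℝ} (ha : (1 + √2) ^ 2 < a) (hv : 0 < v) :
    a < slowRatio v ↔ v < 2 / ((√a - 1) ^ 2 - 2) := by
  have one_le : 1 ≤ a := (one_le_pow₀ (by simp)).trans ha.le
  have denom_pos : 0 < (√a - 1) ^ 2 - 2 :=
    sub_pos.mpr (lt_sqrt_sub_one_sq_of_one_add_sqrt_sq_lt ha)
  rw [slowRatio_eq_sq hv, lt_one_add_sqrt_sq_iff one_le, ← sub_lt_iff_lt_add',
    lt_div_comm₀ hv denom_pos]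

theorem fastRatio_sub_eight {p : ℝ} (hp : p ≠ 0) (hp2 : p ≠ 2) :
    fastRatio p - 8 = (3 * p - 4) ^ 2 / (p * (2 - p)) := by
  have two_sub_ne : 2 - p ≠ 0 := sub_ne_zero.mpr hp2.symm
  rw [fastRatio]
  field_simp
  ring

theorem eight_le_fastRatio {p : ℝ} (hp : 0 < p) (hp2 : p < 2) : 8 ≤ fastRatio p := by
  rw [← sub_nonneg, fastRatio_sub_eight hp.ne' hp2.ne]
  exact div_nonneg (sq_nonneg _) (mul_pos hp (sub_pos.mpr hp2)).le

theorem one_add_sqrt_two_sq_lt_eight : (1 + √2) ^ 2 < 8 := by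
  have sq_sqrt : √2 ^ 2 = 2 := Real.sq_sqrt zero_le_two
  linarith [Real.sqrt_two_lt_three_halves]

theorem fast_vs_slow_threshold_general (p v : ℝ) (hp : 0 < p) (hp2 : p < 2) (hv : 0 < v) :
    8 / p + p / (2 - p) < 3 + 2 / v + 2 * Real.sqrt (2 + 2 / v) ↔
      v < 2 / ((8 / p + p / (2 - p) - 3) + 2
        - 2 * Real.sqrt ((8 / p + p / (2 - p) - 3) + 3)) := by
  change fastRatio p < slowRatio v ↔
    v < 2 / ((fastRatio p - 3) + 2 - 2 * √((fastRatio p - 3) + 3))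
  have eight_le : 8 ≤ fastRatio p := eight_le_fastRatio hp hp2
  have sq_sqrt : √(fastRatio p) ^ 2 = fastRatio p := Real.sq_sqrt (by linarith)
  have denom_eq : (fastRatio p - 3) + 2 - 2 * √((fastRatio p - 3) + 3)
      = (√(fastRatio p) - 1) ^ 2 - 2 := by
    rw [sub_add_cancel]
    linear_combination -sq_sqrt
  rw [denom_eq]
  exact lt_slowRatio_iff (one_add_sqrt_two_sq_lt_eight.trans_le eight_le) hv

/-- Threshold on v for the Fast Approach to beat the Slow Approach: with
F = 8/p + p/(2−p) − 3, one has 8/p + p/(2−p) < 3 + 2/v + 2√(2 + 2/v) iff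
v < 2/(F + 2 − 2√(F + 3)). -/
theorem fast_vs_slow_threshold (p v : ℝ) (hp : 0 < p) (hp1 : p ≤ 1)
    (hv : 0 < v) (hv1 : v ≤ 1) :
    8 / p + p / (2 - p) < 3 + 2 / v + 2 * Real.sqrt (2 + 2 / v) ↔
      v < 2 / ((8 / p + p / (2 - p) - 3) + 2
        - 2 * Real.sqrt ((8 / p + p / (2 - p) - 3) + 3)) :=
  fast_vs_slow_threshold_general p v hp (hp1.trans_lt one_lt_two) hv
end
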